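/- arXiv:2406.05067 — 4 statements merged into one kernel-verified Lean document; each statement's English description precedes it below -/
import Mathlib

section
/- There is an algebra isomorphism Φ from the universal enveloping algebra U(g[u]) of the current algebra onto the associated graded algebra Gr_κ g[t,t⁻¹] of U(g[t,t⁻¹]) with respect to the filtration (κ_r), which sends x u^r to x̄_{r,0} for every x∈g and r≥0. -/
open Finsupp

noncomputable section

/-- The element `x_{r,k} = x (t−1)^r t^k = ∑_{s=0}^r (−1)^{r−s} (r choose s) x t^{s+k}`
of the loop algebra, expressed via the structure maps `T k : g →ₗ[ℂ] L`, `x ↦ x t^k`. -/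
def xrk {g L : Type*} [AddCommGroup g] [Module ℂ g] [AddCommGroup L] [Module ℂ L]
    (T : ℤ → g →ₗ[ℂ] L) (r : ℕ) (k : ℤ) (x : g) : L :=
  ∑ s ∈ Finset.range (r + 1), ((-1 : ℤ) ^ (r - s) * (r.choose s)) • T ((s : ℤ) + k) x

/-- The two-sided ideal `κ_r` of `U(g[t,t⁻¹])` generated by the products
`(x₁)_{r₁,k₁} ⋯ (x_a)_{r_a,k_a}` with `r₁ + ⋯ + r_a ≥ r`. -/
def kappa {g L : Type*} [AddCommGroup g] [Module ℂ g] [LieRing L] [LieAlgebra ℂ L]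
    (T : ℤ → g →ₗ[ℂ] L) (r : ℕ) : TwoSidedIdeal (UniversalEnvelopingAlgebra ℂ L) :=
  TwoSidedIdeal.span {u | ∃ (a : ℕ) (xs : Fin a → g) (rs : Fin a → ℕ) (ks : Fin a → ℤ),
    r ≤ ∑ i, rs i ∧
    u = (List.ofFn fun i =>
          UniversalEnvelopingAlgebra.ι ℂ (xrk T (rs i) (ks i) (xs i))).prod}

section UniversalEnveloping

attribute [local instance] LieRing.ofAssociativeRing

open UniversalEnvelopingAlgebra

variable {L : Type*} [LieRing L] [LieAlgebra ℂ L]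

theorem ι_mul_sub_ι_mul (a b : L) : ι ℂ a * ι ℂ b - ι ℂ b * ι ℂ a = ι ℂ ⁅a, b⁆ := by
  rw [LieHom.map_lie, LieRing.of_associative_ring_bracket]

/-- A subalgebra of an enveloping algebra containing a spanning set of the Lie algebra is
everything. -/
theorem subalgebra_eq_top_of_ι_mem {I g : Type*} [AddCommGroup g] [Module ℂ g]
    {T : I → g →ₗ[ℂ] L} (hT : Function.Surjective fun m : I →₀ g => m.sum fun k x => T k x)
    (S : Subalgebra ℂ (UniversalEnvelopingAlgebra ℂ L)) (hS : ∀ k x, ι ℂ (T k x) ∈ S) :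
    S = ⊤ := by
  have hmem : ∀ a : L, ι ℂ a ∈ S := by
    intro a
    obtain ⟨m, rfl⟩ := hT a
    simp only [Finsupp.sum, map_sum]
    exact sum_mem fun k _ => hS k _
  let f : L →ₗ⁅ℂ⁆ S :=
    { toFun := fun a => ⟨ι ℂ a, hmem a⟩
      map_add' := fun a b => Subtype.ext (map_add (ι ℂ) a b)
      map_smul' := fun c a => Subtype.ext (map_smul (ι ℂ) c a)
      map_lie' := fun {a b} => Subtype.ext (ι_mul_sub_ι_mul a b).symm }
  have hid : S.val.comp (lift ℂ f) = AlgHom.id ℂ _ := by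
    apply hom_ext
    ext a
    change S.val (lift ℂ f (ι ℂ a)) = ι ℂ a
    rw [lift_ι_apply]
    rfl
  refine eq_top_iff.2 fun u _ => ?_
  have hu := DFunLike.congr_fun hid u
  rw [AlgHom.id_apply] at hu
  rw [← hu]
  exact (lift ℂ f u).2

/-- The universal property of `U(L)` for a Lie algebra `L = ⨁ₖ T k g` with
`⁅T k x, T l y⁆ = T (k + l) ⁅x, y⁆`. -/
theorem exists_algHom_of_graded {I g : Type*} [Add I] [LieRing g] [LieAlgebra ℂ g]
    {T : I → g →ₗ[ℂ] L} (hTbrk : ∀ k l x y, ⁅T k x, T l y⁆ = T (k + l) ⁅x, y⁆)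
    (hTbij : Function.Bijective fun m : I →₀ g => m.sum fun k x => T k x)
    {A : Type*} [Ring A] [Algebra ℂ A] (f : I → g →ₗ[ℂ] A)
    (hf : ∀ k l x y, f k x * f l y - f l y * f k x = f (k + l) ⁅x, y⁆) :
    ∃ φ : UniversalEnvelopingAlgebra ℂ L →ₐ[ℂ] A, ∀ k x, φ (ι ℂ (T k x)) = f k x := by
  let e : (I →₀ g) ≃ₗ[ℂ] L := LinearEquiv.ofBijective (Finsupp.lsum ℂ T) hTbij
  let F : L →ₗ[ℂ] A := Finsupp.lsum ℂ f ∘ₗ e.symm.toLinearMap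
  have he : ∀ k x, e (single k x) = T k x := fun k x => Finsupp.lsum_single ℂ T k x
  have hF : ∀ k x, F (T k x) = f k x := by
    intro k x
    simp only [F, LinearMap.comp_apply, LinearEquiv.coe_coe, ← he, e.symm_apply_apply]
    exact Finsupp.lsum_single ℂ f k x
  have hind : ∀ p : L → Prop, (∀ k x, p (T k x)) → p 0 →
      (∀ a b, p a → p b → p (a + b)) → ∀ a, p a := by
    intro p h h0 hadd a
    obtain ⟨m, rfl⟩ := hTbij.2 a
    exact Finset.sum_induction _ p hadd h0 fun k _ => h k _
  have hlie : ∀ a b, F ⁅a, b⁆ = F a * F b - F b * F a := by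
    intro a b
    refine hind (fun a => F ⁅a, b⁆ = F a * F b - F b * F a) (fun k x => ?_) (by simp)
      (fun a c ha hc => ?_) a
    · refine hind (fun b => F ⁅T k x, b⁆ = F (T k x) * F b - F b * F (T k x)) (fun l y => ?_)
        (by simp) (fun b c hb hc => ?_) b
      · rw [hTbrk, hF, hF, hF, hf]
      · rw [lie_add, map_add, hb, hc, map_add, mul_add, add_mul]
        abel
    · rw [add_lie, map_add, ha, hc, map_add, mul_add, add_mul]
      abel
  let F' : L →ₗ⁅ℂ⁆ A :=
    { toLinearMap := F
      map_lie' := fun {a b} => (hlie a b).trans (LieRing.of_associative_ring_bracket _ _).symm }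
  refine ⟨lift ℂ F', fun k x => ?_⟩
  rw [lift_ι_apply]
  exact hF k x

end UniversalEnveloping

/-- The total degree `r₁ + ⋯ + r_a` of a list of triples `(xᵢ, rᵢ, kᵢ)`. -/
def monomialDegree {g : Type*} (l : List (g × ℕ × ℤ)) : ℕ :=
  (l.map fun p => p.2.1).sum

theorem monomialDegree_cons {g : Type*} (p : g × ℕ × ℤ) (l : List (g × ℕ × ℤ)) :
    monomialDegree (p :: l) = p.2.1 + monomialDegree l := by
  simp [monomialDegree]

section Filtration

open UniversalEnvelopingAlgebra

variable {g L : Type*} [LieRing g] [LieAlgebra ℂ g] [LieRing L] [LieAlgebra ℂ L]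
  {T : ℤ → g →ₗ[ℂ] L}

theorem xrk_eq_fwdDiff_iter (T : ℤ → g →ₗ[ℂ] L) (r : ℕ) (k : ℤ) (x : g) :
    xrk T r k x = (fwdDiff (1 : ℤ))^[r] (fun j => T j x) k := by
  rw [fwdDiff_iter_eq_sum_shift]
  simp [xrk, add_comm]

theorem xrk_zero (T : ℤ → g →ₗ[ℂ] L) (k : ℤ) (x : g) : xrk T 0 k x = T k x := by
  rw [xrk_eq_fwdDiff_iter]; rfl

theorem xrk_succ (T : ℤ → g →ₗ[ℂ] L) (r : ℕ) (k : ℤ) (x : g) :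
    xrk T (r + 1) k x = xrk T r (k + 1) x - xrk T r k x := by
  simp only [xrk_eq_fwdDiff_iter, Function.iterate_succ_apply']
  rfl

theorem xrk_add (T : ℤ → g →ₗ[ℂ] L) (r : ℕ) (k : ℤ) (x y : g) :
    xrk T r k (x + y) = xrk T r k x + xrk T r k y := by
  simp [xrk, Finset.sum_add_distrib]

theorem xrk_smul (T : ℤ → g →ₗ[ℂ] L) (r : ℕ) (k : ℤ) (c : ℂ) (x : g) :
    xrk T r k (c • x) = c • xrk T r k x := by
  simp only [xrk, map_smul, Finset.smul_sum]
  exact Finset.sum_congr rfl fun s _ => smul_comm _ _ _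

theorem lie_xrk_xrk (hTbrk : ∀ k l x y, ⁅T k x, T l y⁆ = T (k + l) ⁅x, y⁆)
    (r s : ℕ) (k l : ℤ) (x y : g) :
    ⁅xrk T r k x, xrk T s l y⁆ = xrk T (r + s) (k + l) ⁅x, y⁆ := by
  induction r generalizing k with
  | zero =>
    induction s generalizing l with
    | zero => simp only [add_zero, xrk_zero, hTbrk]
    | succ s ih =>
      rw [xrk_succ, lie_sub, ih, ih, ← add_assoc, ← add_assoc, ← xrk_succ]
  | succ r ih =>
    rw [xrk_succ, sub_lie, ih, ih, add_right_comm k 1 l, ← xrk_succ, add_right_comm r s 1]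

/-- The product `(x₁)_{r₁,k₁} ⋯ (x_a)_{r_a,k_a}` indexed by a list of triples `(xᵢ, rᵢ, kᵢ)`. -/
def monomialProd (T : ℤ → g →ₗ[ℂ] L) (l : List (g × ℕ × ℤ)) : UniversalEnvelopingAlgebra ℂ L :=
  (l.map fun p => ι ℂ (xrk T p.2.1 p.2.2 p.1)).prod

/-- The linear span of the products of total degree at least `r`. -/
def monomialSpan (T : ℤ → g →ₗ[ℂ] L) (r : ℕ) : Submodule ℂ (UniversalEnvelopingAlgebra ℂ L) :=
  Submodule.span ℂ (monomialProd T '' {l | r ≤ monomialDegree l})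

theorem monomialProd_cons (p : g × ℕ × ℤ) (l : List (g × ℕ × ℤ)) :
    monomialProd T (p :: l) = ι ℂ (xrk T p.2.1 p.2.2 p.1) * monomialProd T l := by
  simp [monomialProd]

theorem monomialProd_mem_kappa {r : ℕ} {l : List (g × ℕ × ℤ)} (h : r ≤ monomialDegree l) :
    monomialProd T l ∈ kappa T r := by
  refine TwoSidedIdeal.subset_span ⟨l.length, fun i => (l.get i).1, fun i => (l.get i).2.1,
    fun i => (l.get i).2.2, ?_, ?_⟩
  · rw [← List.sum_ofFn]
    convert! h
    rw [monomialDegree]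
    congr 1
    conv_rhs => rw [← List.ofFn_get l, List.map_ofFn]
    rfl
  · rw [monomialProd]
    congr 1
    conv_lhs => rw [← List.ofFn_get l, List.map_ofFn]
    rfl

theorem ι_xrk_mem_kappa (r : ℕ) (k : ℤ) (x : g) : ι ℂ (xrk T r k x) ∈ kappa T r := by
  have h := monomialProd_mem_kappa (T := T) (l := [(x, r, k)]) (r := r) (by simp [monomialDegree])
  simpa [monomialProd] using h

theorem one_mem_kappa_zero : (1 : UniversalEnvelopingAlgebra ℂ L) ∈ kappa T 0 := by
  simpa [monomialProd] using monomialProd_mem_kappa (T := T) (l := []) (r := 0) (Nat.zero_le _)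

theorem mul_mem_monomialSpan {r s : ℕ} {u v : UniversalEnvelopingAlgebra ℂ L}
    (hu : u ∈ monomialSpan T r) (hv : v ∈ monomialSpan T s) :
    u * v ∈ monomialSpan T (r + s) := by
  have h := Submodule.mul_mem_mul hu hv
  rw [monomialSpan, monomialSpan, Submodule.span_mul_span] at h
  refine Submodule.span_mono ?_ h
  rintro _ ⟨_, ⟨l, hl, rfl⟩, _, ⟨m, hm, rfl⟩, rfl⟩
  refine ⟨l ++ m, ?_, by simp [monomialProd]⟩
  simpa [monomialDegree] using add_le_add hl hm

theorem mem_monomialSpan_zero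
    (hT : Function.Surjective fun m : ℤ →₀ g => m.sum fun k x => T k x)
    (u : UniversalEnvelopingAlgebra ℂ L) : u ∈ monomialSpan T 0 := by
  let S : Subalgebra ℂ (UniversalEnvelopingAlgebra ℂ L) :=
    (monomialSpan T 0).toSubalgebra
      (Submodule.subset_span ⟨[], Nat.zero_le _, by simp [monomialProd]⟩)
      (fun _ _ hu hv => by simpa only [add_zero] using mul_mem_monomialSpan hu hv)
  have hS : S = ⊤ := subalgebra_eq_top_of_ι_mem hT S fun k x =>
    Submodule.subset_span ⟨[(x, 0, k)], Nat.zero_le _, by simp [monomialProd, xrk_zero]⟩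
  have hu : u ∈ S := hS ▸ Algebra.mem_top
  exact hu

theorem mem_monomialSpan_of_mem_kappa
    (hT : Function.Surjective fun m : ℤ →₀ g => m.sum fun k x => T k x)
    {r : ℕ} {u : UniversalEnvelopingAlgebra ℂ L} (hu : u ∈ kappa T r) :
    u ∈ monomialSpan T r := by
  induction hu using TwoSidedIdeal.span_induction with
  | mem u hu =>
    obtain ⟨a, xs, rs, ks, hr, rfl⟩ := hu
    refine Submodule.subset_span ⟨List.ofFn fun i => (xs i, rs i, ks i), ?_, ?_⟩
    · simpa [monomialDegree, List.map_ofFn, Function.comp_def, List.sum_ofFn] using hr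
    · simp [monomialProd, List.map_ofFn, Function.comp_def]
  | zero => exact zero_mem _
  | add u v _ _ hu hv => exact add_mem hu hv
  | neg u _ hu => exact neg_mem hu
  | left_absorb a u _ hu =>
    simpa using mul_mem_monomialSpan (mem_monomialSpan_zero hT a) hu
  | right_absorb a u _ hu =>
    simpa using mul_mem_monomialSpan hu (mem_monomialSpan_zero hT a)

theorem smul_mem_kappa {r : ℕ} (c : ℂ) {u : UniversalEnvelopingAlgebra ℂ L}
    (hu : u ∈ kappa T r) : c • u ∈ kappa T r := by
  rw [Algebra.smul_def]
  exact (kappa T r).mul_mem_left _ _ hu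

theorem mem_kappa_of_mem_monomialSpan {r : ℕ} {u : UniversalEnvelopingAlgebra ℂ L}
    (hu : u ∈ monomialSpan T r) : u ∈ kappa T r := by
  induction hu using Submodule.span_induction with
  | mem u hu =>
    obtain ⟨l, hl, rfl⟩ := hu
    exact monomialProd_mem_kappa hl
  | zero => exact (kappa T r).zero_mem
  | add u v _ _ hu hv => exact (kappa T r).add_mem hu hv
  | smul c u _ hu => exact smul_mem_kappa c hu

theorem mul_mem_kappa
    (hT : Function.Surjective fun m : ℤ →₀ g => m.sum fun k x => T k x)
    {r s : ℕ} {u v : UniversalEnvelopingAlgebra ℂ L} (hu : u ∈ kappa T r) (hv : v ∈ kappa T s) :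
    u * v ∈ kappa T (r + s) :=
  mem_kappa_of_mem_monomialSpan <| mul_mem_monomialSpan
    (mem_monomialSpan_of_mem_kappa hT hu) (mem_monomialSpan_of_mem_kappa hT hv)

end Filtration

section Expansion

open UniversalEnvelopingAlgebra PowerSeries

variable {g L Cu : Type*} [LieRing g] [LieAlgebra ℂ g] [LieRing L] [LieAlgebra ℂ L]
  [LieRing Cu] [LieAlgebra ℂ Cu] {T : ℤ → g →ₗ[ℂ] L} {P : ℕ → g →ₗ[ℂ] Cu}

/-- Expansion of `x t^k` at `t = 1 + u`: the power series `∑ₙ (k choose n) (x uⁿ) zⁿ` with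
coefficients in `U(g[u])`, where `z` records the degree in `u`. -/
def expandAtOne (P : ℕ → g →ₗ[ℂ] Cu) (k : ℤ) :
    g →ₗ[ℂ] PowerSeries (UniversalEnvelopingAlgebra ℂ Cu) where
  toFun x := PowerSeries.mk fun n => Ring.choose k n • ι ℂ (P n x)
  map_add' x y := by ext n; simp
  map_smul' c x := by
    ext n
    have hc : ∀ F : PowerSeries (UniversalEnvelopingAlgebra ℂ Cu),
        coeff n (c • F) = c • coeff n F := fun _ => rfl
    simp only [hc, coeff_mk, map_smul, RingHom.id_apply]
    rw [smul_comm]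

theorem expandAtOne_bracket (hPbrk : ∀ k l x y, ⁅P k x, P l y⁆ = P (k + l) ⁅x, y⁆)
    (k l : ℤ) (x y : g) :
    expandAtOne P k x * expandAtOne P l y - expandAtOne P l y * expandAtOne P k x =
      expandAtOne P (k + l) ⁅x, y⁆ := by
  ext n
  simp only [expandAtOne, LinearMap.coe_mk, AddHom.coe_mk, map_sub, coeff_mul, coeff_mk]
  rw [← Finset.Nat.sum_antidiagonal_swap
    (f := fun p => (Ring.choose l p.1 • ι ℂ (P p.1 y)) * (Ring.choose k p.2 • ι ℂ (P p.2 x))),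
    ← Finset.sum_sub_distrib, Ring.add_choose_eq n (Commute.all k l), Finset.sum_smul]
  refine Finset.sum_congr rfl fun p hp => ?_
  rw [Finset.HasAntidiagonal.mem_antidiagonal] at hp
  simp only [Prod.fst_swap, Prod.snd_swap, smul_mul_smul_comm]
  rw [mul_comm (Ring.choose l _), ← smul_sub, ι_mul_sub_ι_mul, hPbrk, hp]

variable {ψ : UniversalEnvelopingAlgebra ℂ L →ₐ[ℂ] PowerSeries (UniversalEnvelopingAlgebra ℂ Cu)}

theorem coeff_map_xrk (hψ : ∀ k x, ψ (ι ℂ (T k x)) = expandAtOne P k x)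
    (r n : ℕ) (k : ℤ) (x : g) :
    coeff n (ψ (ι ℂ (xrk T r k x))) =
      if r ≤ n then Ring.choose k (n - r) • ι ℂ (P n x) else 0 := by
  induction r generalizing k with
  | zero =>
    rw [xrk_zero, hψ, if_pos n.zero_le, Nat.sub_zero]
    exact coeff_mk n fun n => Ring.choose k n • ι ℂ (P n x)
  | succ r ih =>
    rw [xrk_succ, map_sub, map_sub, map_sub, ih, ih]
    rcases lt_trichotomy r n with h | rfl | h
    · obtain ⟨m, rfl⟩ := Nat.exists_eq_add_of_lt h
      have h₁ : r + m + 1 - r = m + 1 := by omega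
      have h₂ : r + m + 1 - (r + 1) = m := by omega
      rw [if_pos h.le, if_pos h.le, if_pos (Nat.succ_le_of_lt h), h₁, h₂, Ring.choose_succ_succ, ← sub_smul,
        add_sub_cancel_right]
    · simp
    · rw [if_neg (by omega), if_neg (by omega), if_neg (by omega), sub_zero]

theorem coeff_map_eq_zero_of_mem_kappa
    (hT : Function.Surjective fun m : ℤ →₀ g => m.sum fun k x => T k x)
    (hψ : ∀ k x, ψ (ι ℂ (T k x)) = expandAtOne P k x)
    {r n : ℕ} {u : UniversalEnvelopingAlgebra ℂ L} (hu : u ∈ kappa T r) (hn : n < r) :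
    coeff n (ψ u) = 0 := by
  have hprod : ∀ (l : List (g × ℕ × ℤ)) (n : ℕ), n < monomialDegree l →
      coeff n (ψ (monomialProd T l)) = 0 := by
    intro l
    induction l with
    | nil => intro n hn; simp [monomialDegree] at hn
    | cons p l ih =>
      intro n hn
      rw [monomialDegree_cons] at hn
      rw [monomialProd_cons, map_mul, coeff_mul]
      refine Finset.sum_eq_zero fun q hq => ?_
      rw [Finset.HasAntidiagonal.mem_antidiagonal] at hq
      rcases lt_or_ge q.1 p.2.1 with h | h
      · rw [coeff_map_xrk hψ, if_neg (not_le.2 h), zero_mul]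
      · rw [ih _ (by omega), mul_zero]
  replace hu := mem_monomialSpan_of_mem_kappa hT hu
  induction hu using Submodule.span_induction with
  | mem u hu =>
    obtain ⟨l, hl, rfl⟩ := hu
    exact hprod l n (hn.trans_le hl)
  | zero => simp
  | add u v _ _ hu hv => rw [map_add, map_add, hu, hv, add_zero]
  | smul c u _ hu => rw [map_smul]; exact (congrArg (c • ·) hu).trans (smul_zero c)

theorem coeff_map_mul_of_mem_kappa
    (hT : Function.Surjective fun m : ℤ →₀ g => m.sum fun k x => T k x)
    (hψ : ∀ k x, ψ (ι ℂ (T k x)) = expandAtOne P k x)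
    {r s : ℕ} {u v : UniversalEnvelopingAlgebra ℂ L} (hu : u ∈ kappa T r) (hv : v ∈ kappa T s) :
    coeff (r + s) (ψ (u * v)) = coeff r (ψ u) * coeff s (ψ v) := by
  rw [map_mul, coeff_mul]
  refine Finset.sum_eq_single_of_mem (r, s) (by simp) fun q hq hne => ?_
  rw [Finset.HasAntidiagonal.mem_antidiagonal] at hq
  rcases lt_trichotomy q.1 r with h | h | h
  · rw [coeff_map_eq_zero_of_mem_kappa hT hψ hu h, zero_mul]
  · exact absurd (Prod.ext h (by omega)) hne
  · rw [coeff_map_eq_zero_of_mem_kappa hT hψ hv (by omega), mul_zero]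

end Expansion

/-- Proposition 2.1 of the paper.
Let `g` be a finite-dimensional complex simple Lie algebra, `L = g[t,t⁻¹]` its loop algebra
and `Cu = g[u]` its current algebra (both abstractly characterized via their structure
maps).  Let `G` be the associated graded algebra `Gr_κ g[t,t⁻¹] = ⊕_{r≥0} κ_r/κ_{r+1}` of
`U(g[t,t⁻¹])` with respect to the filtration `(κ_r)` (abstractly characterized via the
symbol maps `π r : κ_r → G`).  Then there is an algebra isomorphism
`Φ : U(g[u]) ≅ Gr_κ g[t,t⁻¹]` sending `x u^r ↦ x̄_{r,0}` for all `x ∈ g`, `r ≥ 0`. -/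
theorem stmt0 {g : Type*} [LieRing g] [LieAlgebra ℂ g]
    [LieAlgebra.IsSimple ℂ g] [Module.Finite ℂ g]
    -- the loop algebra g[t,t⁻¹], abstractly characterized
    {L : Type*} [LieRing L] [LieAlgebra ℂ L]
    (T : ℤ → g →ₗ[ℂ] L)
    (hTbrk : ∀ (k l : ℤ) (x y : g), ⁅T k x, T l y⁆ = T (k + l) ⁅x, y⁆)
    (hTbij : Function.Bijective fun m : ℤ →₀ g => m.sum fun k x => T k x)
    -- the current algebra g[u], abstractly characterized
    {Cu : Type*} [LieRing Cu] [LieAlgebra ℂ Cu]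
    (P : ℕ → g →ₗ[ℂ] Cu)
    (hPbrk : ∀ (k l : ℕ) (x y : g), ⁅P k x, P l y⁆ = P (k + l) ⁅x, y⁆)
    (hPbij : Function.Bijective fun m : ℕ →₀ g => m.sum fun k x => P k x)
    -- the associated graded algebra of U(g[t,t⁻¹]) w.r.t. the filtration κ,
    -- abstractly characterized by the symbol maps π r : κ r → G
    {G : Type*} [Ring G] [Algebra ℂ G]
    (π : ℕ → UniversalEnvelopingAlgebra ℂ L →ₗ[ℂ] G)
    (hπker : ∀ (r : ℕ) (x), x ∈ kappa T r → (π r x = 0 ↔ x ∈ kappa T (r + 1)))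
    (hπmul : ∀ (r s : ℕ) (x y), x ∈ kappa T r → y ∈ kappa T s →
      π r x * π s y = π (r + s) (x * y))
    (hπone : π 0 1 = 1)
    (hπspan : Submodule.span ℂ (⋃ r : ℕ, π r '' {x | x ∈ kappa T r}) = ⊤)
    (hπind : ∀ F : ℕ →₀ UniversalEnvelopingAlgebra ℂ L, (∀ r, F r ∈ kappa T r) →
      (F.sum fun r x => π r x) = 0 → ∀ r, π r (F r) = 0) :
    ∃ Φ : UniversalEnvelopingAlgebra ℂ Cu ≃ₐ[ℂ] G,
      ∀ (x : g) (r : ℕ),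
        Φ (UniversalEnvelopingAlgebra.ι ℂ (P r x))
          = π r (UniversalEnvelopingAlgebra.ι ℂ (xrk T r 0 x)) := by
  let U := UniversalEnvelopingAlgebra ℂ L
  let V := UniversalEnvelopingAlgebra ℂ Cu
  obtain ⟨ψ, hψ⟩ := exists_algHom_of_graded hTbrk hTbij (expandAtOne P)
    (expandAtOne_bracket hPbrk)
  let f : ℕ → g →ₗ[ℂ] G := fun r =>
    { toFun := fun x => π r (UniversalEnvelopingAlgebra.ι ℂ (xrk T r 0 x))
      map_add' := fun x y => by simp only [xrk_add, map_add]
      map_smul' := fun c x => by simp only [xrk_smul, map_smul, RingHom.id_apply] }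
  obtain ⟨Φ, hΦ⟩ := exists_algHom_of_graded hPbrk hPbij f (by
    intro r s x y
    change π r _ * π s _ - π s _ * π r _ = π (r + s) _
    rw [hπmul r s _ _ (ι_xrk_mem_kappa _ _ _) (ι_xrk_mem_kappa _ _ _),
      hπmul s r _ _ (ι_xrk_mem_kappa _ _ _) (ι_xrk_mem_kappa _ _ _), add_comm s r, ← map_sub,
      ι_mul_sub_ι_mul, lie_xrk_xrk hTbrk, add_zero])
  have hshift : ∀ (r : ℕ) (k : ℤ) (x : g),
      π r (UniversalEnvelopingAlgebra.ι ℂ (xrk T r k x)) = f r x := by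
    intro r k x
    have hstep : ∀ k : ℤ, π r (UniversalEnvelopingAlgebra.ι ℂ (xrk T r (k + 1) x)) =
        π r (UniversalEnvelopingAlgebra.ι ℂ (xrk T r k x)) := by
      intro k
      have hmem := ι_xrk_mem_kappa (T := T) (r + 1) k x
      rw [xrk_succ, map_sub] at hmem
      rw [← sub_eq_zero, ← map_sub]
      exact (hπker r _ ((kappa T r).sub_mem (ι_xrk_mem_kappa _ _ _)
        (ι_xrk_mem_kappa _ _ _))).2 hmem
    induction k using Int.induction_on with
    | zero => rfl
    | succ k ih => rw [hstep, ih]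
    | pred k ih => rw [← ih, ← hstep, sub_add_cancel]
  have hmono : ∀ l : List (g × ℕ × ℤ),
      π (monomialDegree l) (monomialProd T l) ∈ Φ.range := by
    intro l
    induction l with
    | nil =>
      simp only [monomialDegree, monomialProd, List.map_nil, List.sum_nil, List.prod_nil, hπone]
      exact one_mem _
    | cons p l ih =>
      rw [monomialProd_cons, monomialDegree_cons,
        ← hπmul _ _ _ _ (ι_xrk_mem_kappa _ _ _) (monomialProd_mem_kappa le_rfl)]
      refine mul_mem ⟨UniversalEnvelopingAlgebra.ι ℂ (P p.2.1 p.1), ?_⟩ ih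
      exact (hΦ _ _).trans (hshift _ _ _).symm
  have hsurj : Function.Surjective Φ := by
    have hle : (⊤ : Submodule ℂ G) ≤ Subalgebra.toSubmodule Φ.range := by
      rw [← hπspan, Submodule.span_le]
      refine Set.iUnion_subset fun r => ?_
      rintro _ ⟨u, hu, rfl⟩
      have hu' : monomialSpan T r ≤ (Subalgebra.toSubmodule Φ.range).comap (π r) := by
        refine Submodule.span_le.2 ?_
        rintro _ ⟨l, hl, rfl⟩
        rcases eq_or_lt_of_le (show r ≤ monomialDegree l from hl) with rfl | h
        · exact hmono l
        · have h0 := (hπker r _ (monomialProd_mem_kappa hl)).2 (monomialProd_mem_kappa (T := T) h)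
          change π r _ ∈ Φ.range
          rw [h0]
          exact zero_mem _
      exact hu' (mem_monomialSpan_of_mem_kappa hTbij.2 hu)
    exact fun y => hle (Submodule.mem_top (x := y))
  let lam : ℕ → U →ₗ[ℂ] V := fun r =>
    { toFun := fun u => PowerSeries.coeff r (ψ u)
      map_add' := fun u v => by rw [map_add, map_add]
      map_smul' := fun c u => by rw [map_smul]; rfl }
  let pair : ℕ → U →ₗ[ℂ] G × V := fun r => (π r).prod (lam r)
  let W : Submodule ℂ (G × V) := Submodule.span ℂ {p | ∃ r, ∃ u ∈ kappa T r, p = pair r u}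
  have hlam_one : lam 0 1 = 1 := by
    change PowerSeries.coeff 0 (ψ 1) = 1
    rw [map_one, PowerSeries.coeff_zero_one]
  let S : Subalgebra ℂ (G × V) := W.toSubalgebra
    (Submodule.subset_span ⟨0, 1, one_mem_kappa_zero, Prod.ext hπone.symm hlam_one.symm⟩)
    (by
      intro a b ha hb
      have h := Submodule.mul_mem_mul ha hb
      rw [Submodule.span_mul_span] at h
      refine Submodule.span_mono ?_ h
      rintro _ ⟨_, ⟨r, u, hu, rfl⟩, _, ⟨s, v, hv, rfl⟩, rfl⟩
      refine ⟨r + s, u * v, mul_mem_kappa hTbij.2 hu hv, Prod.ext (hπmul r s u v hu hv) ?_⟩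
      exact (coeff_map_mul_of_mem_kappa hTbij.2 hψ hu hv).symm)
  have hgraph : ∀ w : V, (Φ w, w) ∈ W := by
    have htop := subalgebra_eq_top_of_ι_mem hPbij.2 (S.comap (Φ.prod (AlgHom.id ℂ V))) (by
      intro r x
      refine Submodule.subset_span ⟨r, _, ι_xrk_mem_kappa r 0 x, Prod.ext (hΦ r x) ?_⟩
      change _ = PowerSeries.coeff r (ψ _)
      rw [coeff_map_xrk hψ, if_pos le_rfl, Nat.sub_self, Ring.choose_zero_right, one_smul]
      rfl)
    intro w
    have hw : w ∈ S.comap (Φ.prod (AlgHom.id ℂ V)) := htop ▸ Algebra.mem_top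
    exact hw
  have hW : ∀ p ∈ W, ∃ F : ℕ →₀ U, (∀ r, F r ∈ kappa T r) ∧
      p = F.sum fun r u => pair r u := by
    intro p hp
    induction hp using Submodule.span_induction with
    | mem p hp =>
      obtain ⟨r, u, hu, rfl⟩ := hp
      refine ⟨single r u, fun s => ?_, Eq.symm ?_⟩
      · rcases eq_or_ne r s with rfl | h
        · simpa using hu
        · rw [single_eq_of_ne h.symm]
          exact (kappa T s).zero_mem
      · exact sum_single_index (h := fun r u => pair r u) (map_zero (pair r))
    | zero => exact ⟨0, fun r => (kappa T r).zero_mem, by simp⟩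
    | add p q _ _ hp hq =>
      obtain ⟨F, hF, rfl⟩ := hp
      obtain ⟨F', hF', rfl⟩ := hq
      refine ⟨F + F', fun r => (kappa T r).add_mem (hF r) (hF' r), ?_⟩
      rw [sum_add_index' (fun _ => map_zero _) (fun _ => map_add _)]
    | smul c p _ hp =>
      obtain ⟨F, hF, rfl⟩ := hp
      refine ⟨c • F, fun r => ?_, ?_⟩
      · exact smul_mem_kappa c (hF r)
      · rw [sum_smul_index' (fun _ => map_zero _), smul_sum]
        simp only [map_smul]
  have hinj : Function.Injective Φ := by
    refine (injective_iff_map_eq_zero Φ).2 fun w hw => ?_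
    obtain ⟨F, hF, hsum⟩ := hW _ (hgraph w)
    have hfst : (F.sum fun r u => π r u) = 0 := by
      have h := congrArg (LinearMap.fst ℂ G V) hsum
      rw [map_finsuppSum] at h
      exact h.symm.trans hw
    have hsnd : w = F.sum fun r u => lam r u := by
      have h := congrArg (LinearMap.snd ℂ G V) hsum
      rw [map_finsuppSum] at h
      exact h
    rw [hsnd]
    refine Finset.sum_eq_zero fun r _ => ?_
    exact coeff_map_eq_zero_of_mem_kappa hTbij.2 hψ
      ((hπker r _ (hF r)).1 (hπind F hF hfst r)) (Nat.lt_succ_self r)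
  exact ⟨AlgEquiv.ofBijective Φ ⟨hinj, hsurj⟩, fun x r => hΦ r x⟩
end
end

section
/- Let A be an associative ℂ[ħ]-algebra, d_i a positive integer, and let b_{i,r} (r∈ℕ) and h_{i,s} (s∈ℕ) be elements of A with h_{i,s}=0 whenever s is even. Then the following two families of relations are equivalent: (i) [b_{i,s},b_{i,r+1}]−[b_{i,s+1},b_{i,r}]+ħ d_i (b_{i,r}b_{i,s}+b_{i,s}b_{i,r}) = 2(−1)^s h_{i,r+s+1} for all r,s∈ℕ; (ii) [b_{i,s},b_{i,r+1}] = −ħ d_i Σ_{t=0}^{r−s} b_{i,r−t}b_{i,s+t} + (−1)^s h_{i,r+s+1} for all s≤r in ℕ. -/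
open Polynomial Finset

/-- A module over `ℂ[X]` has no 2-torsion. -/
theorem add_self_injective_of_module_polynomial {M : Type*} [AddCommGroup M] [Module ℂ[X] M]
    {x y : M} (hxy : x + x = y + y) : x = y := by
  have half_smul (z : M) : (C (1 / 2 : ℂ)) • (z + z) = z := by
    rw [← two_smul ℂ[X] z, smul_smul, ← C_ofNat, ← C_mul]
    norm_num
  rw [← half_smul x, hxy, half_smul]

/-- Splitting off the two extreme terms of `∑ b (r - t) * b (s + t)`, for `r = s + k + 2`. -/
theorem sum_range_mul_reflect_add_three {A : Type*} [Ring A] (b : ℕ → A) (s k : ℕ) :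
    ∑ t ∈ range (k + 3), b (s + k + 2 - t) * b (s + t) =
      b (s + k + 2) * b s + b s * b (s + k + 2) +
        ∑ t ∈ range (k + 1), b (s + k + 1 - t) * b (s + 1 + t) := by
  rw [sum_range_succ, sum_range_succ']
  have inner : ∀ t, b (s + k + 2 - (t + 1)) * b (s + (t + 1)) =
      b (s + k + 1 - t) * b (s + 1 + t) := fun t => by
    congr 2 <;> omega
  have last : s + k + 2 - (k + 2) = s := by omega
  simp only [inner, last, Nat.sub_zero, Nat.add_zero, ← Nat.add_assoc s k 2]
  abel

/-- Lemma 4.3(1) of the paper.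
Let `A` be an associative `ℂ[ħ]`-algebra, `d` a positive integer, and `b r` (`r ∈ ℕ`),
`h s` (`s ∈ ℕ`) elements of `A` with `h s = 0` whenever `s` is even.  Then the relations
`[b s, b (r+1)] − [b (s+1), b r] + ħ d (b r b s + b s b r) = 2 (−1)^s h (r+s+1)` (for all `r s`)
hold if and only if the relations
`[b s, b (r+1)] = −ħ d ∑_{t=0}^{r−s} b (r−t) b (s+t) + (−1)^s h (r+s+1)` (for all `s ≤ r`) hold.
Here `ħ = X ∈ ℂ[X]` acts via the algebra structure and `[x,y] = xy − yx`. -/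
theorem stmt10 {A : Type*} [Ring A] [Algebra (Polynomial ℂ) A]
    (d : ℕ) (hdpos : 0 < d) (b : ℕ → A) (h : ℕ → A)
    (hEven : ∀ s : ℕ, Even s → h s = 0) :
    (∀ r s : ℕ,
        ⁅b s, b (r + 1)⁆ - ⁅b (s + 1), b r⁆
          + (((d : Polynomial ℂ) * Polynomial.X) • (b r * b s + b s * b r))
        = (Polynomial.C ((2 : ℂ) * (-1 : ℂ) ^ s)) • h (r + s + 1))
    ↔ (∀ s r : ℕ, s ≤ r →
        ⁅b s, b (r + 1)⁆
          = -(((d : Polynomial ℂ) * Polynomial.X) •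
                ∑ t ∈ Finset.range (r - s + 1), b (r - t) * b (s + t))
            + (Polynomial.C ((-1 : ℂ) ^ s)) • h (r + s + 1)) := by
  have sign_succ (s : ℕ) : C ((-1 : ℂ) ^ (s + 1)) = -C ((-1 : ℂ) ^ s) := by
    rw [pow_succ, mul_neg_one, C_neg]
  have two_sign (s : ℕ) (x : A) :
      C ((2 : ℂ) * (-1 : ℂ) ^ s) • x = C ((-1 : ℂ) ^ s) • x + C ((-1 : ℂ) ^ s) • x := by
    rw [two_mul, C_add, add_smul]
  have h_odd (s : ℕ) : h (s + 1 + s + 1) = 0 := hEven _ ⟨s + 1, by omega⟩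
  have lie_same (x : A) : ⁅x, x⁆ = 0 := by rw [Ring.lie_def, sub_self]
  have lie_swap (x y : A) : ⁅x, y⁆ = -⁅y, x⁆ := by rw [Ring.lie_def, Ring.lie_def, neg_sub]
  simp only [two_sign]
  constructor
  · intro rel s r hsr
    obtain ⟨k, rfl⟩ := Nat.exists_eq_add_of_le hsr
    clear hsr
    rw [Nat.add_sub_cancel_left]
    induction k using Nat.twoStepInduction generalizing s with
    | zero =>
      have key := rel s s
      rw [lie_swap (b (s + 1)) (b s), smul_add] at key
      apply add_self_injective_of_module_polynomial
      simp only [Nat.add_zero, zero_add, sum_range_one, Nat.sub_zero]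
      linear_combination (norm := module) key
    | one =>
      have key := rel (s + 1) s
      rw [lie_same, h_odd] at key
      simp only [sum_range_succ, sum_range_zero, Nat.sub_zero, Nat.add_zero,
        Nat.add_sub_cancel, h_odd]
      linear_combination (norm := module) key
    | more k ih _ =>
      have key := rel (s + k + 2) s
      have inner := ih (s + 1)
      rw [show s + 1 + k = s + k + 1 by omega, sign_succ,
        show s + k + 1 + (s + 1) + 1 = s + k + 2 + s + 1 by omega, neg_smul] at inner
      rw [← Nat.add_assoc s k 2, sum_range_mul_reflect_add_three, smul_add]
      linear_combination (norm := module) key + inner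
  · intro rel
    have rel_of_le (s k : ℕ) :
        ⁅b s, b (s + k + 1)⁆ - ⁅b (s + 1), b (s + k)⁆
          + (((d : ℂ[X]) * X) • (b (s + k) * b s + b s * b (s + k)))
        = C ((-1 : ℂ) ^ s) • h (s + k + s + 1) + C ((-1 : ℂ) ^ s) • h (s + k + s + 1) := by
      have outer := rel s (s + k) (Nat.le_add_right s k)
      rw [Nat.add_sub_cancel_left] at outer
      match k with
      | 0 =>
        simp only [Nat.add_zero, zero_add, sum_range_one, Nat.sub_zero] at outer ⊢
        rw [lie_swap (b (s + 1)) (b s), smul_add]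
        linear_combination (norm := module) outer + outer
      | 1 =>
        simp only [sum_range_succ, sum_range_zero, Nat.sub_zero, Nat.add_zero,
          Nat.add_sub_cancel, h_odd] at outer ⊢
        rw [lie_same]
        linear_combination (norm := module) outer
      | k + 2 =>
        have inner := rel (s + 1) (s + k + 1) (by omega)
        rw [show s + k + 1 - (s + 1) = k by omega, sign_succ,
          show s + k + 1 + (s + 1) + 1 = s + k + 2 + s + 1 by omega, neg_smul] at inner
        rw [← Nat.add_assoc s k 2, sum_range_mul_reflect_add_three, smul_add] at outer
        rw [← Nat.add_assoc s k 2]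
        linear_combination (norm := module) outer - inner
    intro r s
    rcases le_total s r with hsr | hrs
    · obtain ⟨k, rfl⟩ := Nat.exists_eq_add_of_le hsr
      exact rel_of_le s k
    · obtain ⟨k, rfl⟩ := Nat.exists_eq_add_of_le hrs
      have sign_swap : C ((-1 : ℂ) ^ (r + k)) • h (r + (r + k) + 1) =
          C ((-1 : ℂ) ^ r) • h (r + k + r + 1) := by
        rw [show r + (r + k) + 1 = r + k + r + 1 by omega]
        rcases Nat.even_or_odd k with hk | hk
        · rw [pow_add, hk.neg_one_pow, mul_one]
        · rw [hEven (r + k + r + 1) (by grind), smul_zero, smul_zero]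
      rw [sign_swap, ← rel_of_le r k, lie_swap (b (r + k)) (b (r + 1)),
        lie_swap (b (r + k + 1)) (b r), add_comm (b r * b (r + k))]
      abel
end

section
/- Let A be an associative ℂ[ħ]-algebra, d_i a positive integer, c_{ij} an integer, and let b_{j,r} (r∈ℕ) and h_{i,s} (s∈ℕ) be elements of A with h_{i,s}=0 whenever s is even, satisfying [h_{i,1},b_{j,r}]=2c_{ij}b_{j,r+1} for all r. Then the following two families of relations are equivalent: (i) [b_{j,r},h_{i,s+2}]−[b_{j,r+2},h_{i,s}] = −ħ d_i c_{ij}(b_{j,r+1}h_{i,s}+h_{i,s}b_{j,r+1}) + (ħ² d_i² c_{ij}²/4)[b_{j,r},h_{i,s}] for all r∈ℕ and odd s; (ii) [b_{j,r},h_{i,s}] = −ħ d_i c_{ij} Σ_{t=1}^{⌊s/2⌋}(b_{j,r+2t−1}h_{i,s−2t}+h_{i,s−2t}b_{j,r+2t−1}) + (ħ² d_i² c_{ij}²/4) Σ_{t=1}^{⌊s/2⌋}[b_{j,r+2t−2},h_{i,s−2t}] − 2c_{ij} b_{j,r+s} for all r∈ℕ and odd s. -/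
open Polynomial Finset

theorem sum_Icc_one_succ_eq_head_add {M : Type*} [AddCommMonoid M] (f : ℕ → M) (n : ℕ) :
    ∑ t ∈ Finset.Icc 1 (n + 1), f t = f 1 + ∑ t ∈ Finset.Icc 1 n, f (t + 1) := by
  induction n with
  | zero => simp
  | succ n ih =>
    rw [Finset.sum_Icc_succ_top (by omega), ih, Finset.sum_Icc_succ_top (by omega), add_assoc]

/-- Peeling off the first term of a sum along a diagonal: the remaining terms are those of the
sum based at `(r + 2, s)`. -/
theorem sum_Icc_diagonal_add_two {M : Type*} [AddCommMonoid M] (g : ℕ → ℕ → M) (k r s : ℕ) :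
    ∑ t ∈ Finset.Icc 1 ((s + 2) / 2), g (r + 2 * t - k) (s + 2 - 2 * t)
      = g (r + 2 - k) s + ∑ t ∈ Finset.Icc 1 (s / 2), g (r + 2 + 2 * t - k) (s - 2 * t) := by
  rw [show (s + 2) / 2 = s / 2 + 1 by omega, sum_Icc_one_succ_eq_head_add]
  congr 1
  refine Finset.sum_congr rfl fun t _ => ?_
  congr 1 <;> omega

/-- Lemma 4.3(2) of the paper.
Let `A` be an associative `ℂ[ħ]`-algebra, `d` a positive integer, `c` an integer, and
`b r` (`r ∈ ℕ`), `h s` (`s ∈ ℕ`) elements of `A` with `h s = 0` for `s` even, satisfying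
`[h 1, b r] = 2 c · b (r+1)` for all `r`.  Then the relations
`[b r, h (s+2)] − [b (r+2), h s] = −ħ d c (b (r+1) h s + h s b (r+1)) + (ħ² d² c²/4) [b r, h s]`
(for all `r` and odd `s`) hold if and only if the relations
`[b r, h s] = −ħ d c ∑_{t=1}^{⌊s/2⌋} (b (r+2t−1) h (s−2t) + h (s−2t) b (r+2t−1))
  + (ħ² d² c²/4) ∑_{t=1}^{⌊s/2⌋} [b (r+2t−2), h (s−2t)] − 2 c · b (r+s)`
(for all `r` and odd `s`) hold.  Here `ħ = X ∈ ℂ[X]` and `[x,y] = xy − yx`. -/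
theorem stmt11 {A : Type*} [Ring A] [Algebra (Polynomial ℂ) A]
    (d : ℕ) (hdpos : 0 < d) (c : ℤ) (b : ℕ → A) (h : ℕ → A)
    (hEven : ∀ s : ℕ, Even s → h s = 0)
    (hR2 : ∀ r : ℕ, ⁅h 1, b r⁆ = (Polynomial.C ((2 : ℂ) * (c : ℂ))) • b (r + 1)) :
    (∀ r s : ℕ, Odd s →
        ⁅b r, h (s + 2)⁆ - ⁅b (r + 2), h s⁆
          = -((Polynomial.C ((d : ℂ) * (c : ℂ)) * Polynomial.X) •
                (b (r + 1) * h s + h s * b (r + 1)))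
            + ((Polynomial.C ((d : ℂ) ^ 2 * (c : ℂ) ^ 2 / 4) * Polynomial.X ^ 2) •
                ⁅b r, h s⁆))
    ↔ (∀ r s : ℕ, Odd s →
        ⁅b r, h s⁆
          = -((Polynomial.C ((d : ℂ) * (c : ℂ)) * Polynomial.X) •
                ∑ t ∈ Finset.Icc 1 (s / 2),
                  (b (r + 2 * t - 1) * h (s - 2 * t) + h (s - 2 * t) * b (r + 2 * t - 1)))
            + ((Polynomial.C ((d : ℂ) ^ 2 * (c : ℂ) ^ 2 / 4) * Polynomial.X ^ 2) •
                ∑ t ∈ Finset.Icc 1 (s / 2), ⁅b (r + 2 * t - 2), h (s - 2 * t)⁆)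
            - (Polynomial.C ((2 : ℂ) * (c : ℂ))) • b (r + s)) := by
  have hAnti := fun r s => sum_Icc_diagonal_add_two (fun m n => b m * h n + h n * b m) 1 r s
  have hComm := fun r s => sum_Icc_diagonal_add_two (fun m n => ⁅b m, h n⁆) 2 r s
  simp only [Nat.add_sub_cancel, show ∀ r : ℕ, r + 2 - 1 = r + 1 from fun _ => rfl]
    at hAnti hComm
  constructor
  · intro hRec r s hs
    obtain ⟨n, rfl⟩ := hs
    induction n generalizing r with
    | zero => simpa [Ring.lie_def] using congrArg Neg.neg (hR2 r)
    | succ n ih =>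
      have hStep := hRec r (2 * n + 1) ⟨n, rfl⟩
      rw [ih (r + 2), sub_eq_iff_eq_add] at hStep
      rw [show 2 * (n + 1) + 1 = 2 * n + 1 + 2 by ring, hAnti, hComm, hStep,
        show r + (2 * n + 1 + 2) = r + 2 + (2 * n + 1) by ring]
      simp only [smul_add]
      abel
  · intro hClosed r s hs
    rw [hClosed r (s + 2) (hs.add_even even_two), hClosed (r + 2) s hs, hAnti, hComm,
      show r + (s + 2) = r + 2 + s by ring]
    simp only [smul_add]
    abel
end

section
/- In the associated graded algebra of the twisted Yangian 'Y of type G₂ with respect to the filtration given by deg b_{i,m}=m+1, deg h_{i,r}=r+1, the following identities hold for all k₁,k₂,k₃,k₄,r∈ℕ: [b̆_{1,k₁},[b̆_{1,k₂},b̆_{2,r}]]=0 and [b̆_{2,k₁},[b̆_{2,k₂},[b̆_{2,k₃},[b̆_{2,k₄},b̆_{1,r}]]]]=0, where b̆_{i,m} denotes the image of b_{i,m} in the associated graded algebra. -/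
open Polynomial Finset

noncomputable section
set_option synthInstance.maxHeartbeats 1000000
set_option maxHeartbeats 1000000

/-- Generators of the twisted Yangian of type G₂: the `h_{i,s}` and the `b_{j,r}`
(the symbols `h_{i,s}` for `s` even are set to zero by the relation `hEven`,
implementing the convention `h_{i,s} = 0` for `s` even).  Here `I⁰ = {1,2}` is realized
as `Fin 2`, with the paper's index `1` (resp. `2`) corresponding to `0` (resp. `1`). -/
abbrev YGen2 := (Fin 2 × ℕ) ⊕ (Fin 2 × ℕ)

/-- The generator `h_{i,s}` in the free algebra over `ℂ[ħ]`. -/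
def hY2 (i : Fin 2) (s : ℕ) : FreeAlgebra (Polynomial ℂ) YGen2 :=
  FreeAlgebra.ι _ (Sum.inl (i, s))

/-- The generator `b_{j,r}` in the free algebra over `ℂ[ħ]`. -/
def bY2 (j : Fin 2) (r : ℕ) : FreeAlgebra (Polynomial ℂ) YGen2 :=
  FreeAlgebra.ι _ (Sum.inr (j, r))

/-- The relations of Definition 7.1 of the paper, defining the twisted Yangian of type
`G₂`: relations (4.1)–(4.4) together with the finite Serre relations
`[b_{1,0},[b_{1,0},b_{2,r}]] = −b_{2,r}` and
`[b_{2,0},[b_{2,0},[b_{2,0},[b_{2,0},b_{1,r}]]]] = −10[b_{2,0},[b_{2,0},b_{1,r}]] − 9 b_{1,r}`.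
Here `ħ = X ∈ ℂ[X]` and `⁅·,·⁆` is the ring commutator; the convention `h_{i,s} = 0` for
`s` even is implemented by the relation `hEven`. -/
inductive YRelG2 (C : Fin 2 → Fin 2 → ℤ) (d : Fin 2 → ℕ) :
    FreeAlgebra (Polynomial ℂ) YGen2 → FreeAlgebra (Polynomial ℂ) YGen2 → Prop
  | hEven (i : Fin 2) (s : ℕ) (hs : Even s) : YRelG2 C d (hY2 i s) 0
  | hh (i j : Fin 2) (s r : ℕ) (hs : Odd s) (hr : Odd r) :
      YRelG2 C d ⁅hY2 i s, hY2 j r⁆ 0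
  | hb (i j : Fin 2) (r : ℕ) :
      YRelG2 C d ⁅hY2 i 1, bY2 j r⁆
        ((Polynomial.C ((2 : ℂ) * (C i j : ℂ))) • bY2 j (r + 1))
  | bh (i j : Fin 2) (r s : ℕ) (hs : Odd s) :
      YRelG2 C d (⁅bY2 j r, hY2 i (s + 2)⁆ - ⁅bY2 j (r + 2), hY2 i s⁆)
        (-((Polynomial.C ((d i : ℂ) * (C i j : ℂ)) * Polynomial.X) •
            (bY2 j (r + 1) * hY2 i s + hY2 i s * bY2 j (r + 1)))
          + (Polynomial.C ((d i : ℂ) ^ 2 * (C i j : ℂ) ^ 2 / 4) * Polynomial.X ^ 2) •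
              ⁅bY2 j r, hY2 i s⁆)
  | bb (i j : Fin 2) (s r : ℕ) :
      YRelG2 C d
        (⁅bY2 i s, bY2 j (r + 1)⁆ - ⁅bY2 i (s + 1), bY2 j r⁆
          + (Polynomial.C ((d i : ℂ) * (C i j : ℂ) / 2) * Polynomial.X) •
              (bY2 j r * bY2 i s + bY2 i s * bY2 j r))
        (if i = j then (Polynomial.C ((2 : ℂ) * (-1 : ℂ) ^ s)) • hY2 i (r + s + 1)
          else 0)
  | serre12 (r : ℕ) :
      YRelG2 C d ⁅bY2 0 0, ⁅bY2 0 0, bY2 1 r⁆⁆ (-(bY2 1 r))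
  | serre21 (r : ℕ) :
      YRelG2 C d ⁅bY2 1 0, ⁅bY2 1 0, ⁅bY2 1 0, ⁅bY2 1 0, bY2 0 r⁆⁆⁆⁆
        ((Polynomial.C (-10 : ℂ)) • ⁅bY2 1 0, ⁅bY2 1 0, bY2 0 r⁆⁆
          - (Polynomial.C (9 : ℂ)) • bY2 0 r)

/-- The image of `b_{j,r}` in the twisted Yangian of type `G₂`. -/
def bYQ2 (C : Fin 2 → Fin 2 → ℤ) (d : Fin 2 → ℕ) (j : Fin 2) (r : ℕ) :
    RingQuot (YRelG2 C d) :=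
  RingQuot.mkAlgHom (Polynomial ℂ) (YRelG2 C d) (bY2 j r)

/-- The image of `h_{i,s}` in the twisted Yangian of type `G₂`. -/
def hYQ2 (C : Fin 2 → Fin 2 → ℤ) (d : Fin 2 → ℕ) (i : Fin 2) (s : ℕ) :
    RingQuot (YRelG2 C d) :=
  RingQuot.mkAlgHom (Polynomial ℂ) (YRelG2 C d) (hY2 i s)

/-- The degree of a generator for the filtration of §7.2 of the paper:
`deg b_{i,m} = m + 1`, `deg h_{i,r} = r + 1` (and `deg ħ = 0`). -/
def ydeg2 : YGen2 → ℕ := Sum.elim (fun p => p.2 + 1) (fun p => p.2 + 1)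

/-- The (increasing) filtration on the twisted Yangian of type `G₂` determined by
`deg b_{i,m} = m + 1`, `deg h_{i,r} = r + 1`, `deg ħ = 0`. -/
def Yfil2 (C : Fin 2 → Fin 2 → ℤ) (d : Fin 2 → ℕ) (dd : ℕ) :
    Submodule (Polynomial ℂ) (RingQuot (YRelG2 C d)) :=
  Submodule.span (Polynomial ℂ)
    {y | ∃ l : List YGen2, (l.map ydeg2).sum ≤ dd ∧
      y = (l.map fun gn =>
            RingQuot.mkAlgHom (Polynomial ℂ) (YRelG2 C d) (FreeAlgebra.ι _ gn)).prod}

section ShiftedBrackets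

variable {L : Type*} [Ring L] {x y : ℕ → L}

/-- If `⁅x s, y (r + 1)⁆ = ⁅x (s + 1), y r⁆` for all `s, r`, then `⁅x s, y r⁆` depends only on
`s + r`. -/
theorem lie_eq_lie_zero_add_of_shift (h : ∀ s r, ⁅x s, y (r + 1)⁆ = ⁅x (s + 1), y r⁆)
    (s r : ℕ) : ⁅x s, y r⁆ = ⁅x 0, y (s + r)⁆ := by
  induction s generalizing r with
  | zero => rw [zero_add]
  | succ s ih => rw [← h, ih, add_right_comm, add_assoc]

/-- A sequence with `⁅x s, x (r + 1)⁆ = ⁅x (s + 1), x r⁆` commutes in the absence of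
two-torsion. -/
theorem lie_eq_zero_of_shift (h2 : ∀ z : L, z + z = 0 → z = 0)
    (h : ∀ s r, ⁅x s, x (r + 1)⁆ = ⁅x (s + 1), x r⁆) (s r : ℕ) : ⁅x s, x r⁆ = 0 := by
  apply h2
  have hskew : ⁅x s, x r⁆ = -⁅x r, x s⁆ := by simp only [Ring.lie_def, neg_sub]
  nth_rw 2 [hskew]
  rw [lie_eq_lie_zero_add_of_shift h s r, lie_eq_lie_zero_add_of_shift h r s, add_comm r s,
    add_neg_cancel]

/-- The outer two entries of an iterated bracket may be exchanged when they commute. -/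
theorem lie_lie_comm_of_lie_eq_zero {a b : L} (h : ⁅a, b⁆ = 0) (c : L) :
    ⁅a, ⁅b, c⁆⁆ = ⁅b, ⁅a, c⁆⁆ := by
  have hab : a * b = b * a := sub_eq_zero.1 h
  have hleibniz : ⁅a, ⁅b, c⁆⁆ - ⁅b, ⁅a, c⁆⁆ = (a * b - b * a) * c - c * (a * b - b * a) := by
    simp only [Ring.lie_def]
    noncomm_ring
  rw [← sub_eq_zero, hleibniz, hab, sub_self, zero_mul, mul_zero, sub_self]

theorem lie_lie_eq_zero_of_shift (hx : ∀ s r, ⁅x s, x r⁆ = 0)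
    (h : ∀ s r, ⁅x s, y (r + 1)⁆ = ⁅x (s + 1), y r⁆) (hS : ∀ r, ⁅x 0, ⁅x 0, y r⁆⁆ = 0)
    (k₁ k₂ r : ℕ) : ⁅x k₁, ⁅x k₂, y r⁆⁆ = 0 := by
  rw [lie_eq_lie_zero_add_of_shift h k₂, lie_lie_comm_of_lie_eq_zero (hx k₁ 0),
    lie_eq_lie_zero_add_of_shift h k₁, hS]

theorem lie_lie_lie_lie_eq_zero_of_shift (hx : ∀ s r, ⁅x s, x r⁆ = 0)
    (h : ∀ s r, ⁅x s, y (r + 1)⁆ = ⁅x (s + 1), y r⁆)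
    (hS : ∀ r, ⁅x 0, ⁅x 0, ⁅x 0, ⁅x 0, y r⁆⁆⁆⁆ = 0) (k₁ k₂ k₃ k₄ r : ℕ) :
    ⁅x k₁, ⁅x k₂, ⁅x k₃, ⁅x k₄, y r⁆⁆⁆⁆ = 0 := by
  have swap (k : ℕ) (c : L) : ⁅x k, ⁅x 0, c⁆⁆ = ⁅x 0, ⁅x k, c⁆⁆ :=
    lie_lie_comm_of_lie_eq_zero (hx k 0) c
  rw [lie_eq_lie_zero_add_of_shift h k₄, swap k₃, lie_eq_lie_zero_add_of_shift h k₃,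
    swap k₂, swap k₂, lie_eq_lie_zero_add_of_shift h k₂,
    swap k₁, swap k₁, swap k₁, lie_eq_lie_zero_add_of_shift h k₁, hS]

end ShiftedBrackets

section Filtration

variable {C : Fin 2 → Fin 2 → ℤ} {d : Fin 2 → ℕ}

theorem Yfil2_mono {m n : ℕ} (h : m ≤ n) : Yfil2 C d m ≤ Yfil2 C d n :=
  Submodule.span_mono fun _ ⟨l, hl, hy⟩ => ⟨l, hl.trans h, hy⟩

theorem mul_mem_Yfil2 {m n : ℕ} {u v : RingQuot (YRelG2 C d)}
    (hu : u ∈ Yfil2 C d m) (hv : v ∈ Yfil2 C d n) : u * v ∈ Yfil2 C d (m + n) := by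
  have h := Submodule.mul_mem_mul hu hv
  rw [Yfil2, Yfil2, Submodule.span_mul_span] at h
  refine Submodule.span_mono ?_ h
  rintro _ ⟨_, ⟨l, hl, rfl⟩, _, ⟨l', hl', rfl⟩, rfl⟩
  refine ⟨l ++ l', ?_, ?_⟩
  · rw [List.map_append, List.sum_append]
    exact add_le_add hl hl'
  · rw [List.map_append, List.prod_append]

theorem neg_mem_Yfil2 {n : ℕ} {u : RingQuot (YRelG2 C d)} (hu : u ∈ Yfil2 C d n) :
    -u ∈ Yfil2 C d n := by
  obtain ⟨a, rfl⟩ := RingQuot.mkAlgHom_surjective (Polynomial ℂ) (YRelG2 C d) u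
  have h : -RingQuot.mkAlgHom (Polynomial ℂ) (YRelG2 C d) a =
      RingQuot.mkAlgHom (Polynomial ℂ) (YRelG2 C d) (-a) :=
    (map_neg (RingQuot.mkAlgHom (Polynomial ℂ) (YRelG2 C d)) a).symm
  rw [h, ← neg_one_smul (Polynomial ℂ) a, map_smul]
  exact Submodule.smul_mem _ _ hu

theorem sub_mem_Yfil2 {n : ℕ} {u v : RingQuot (YRelG2 C d)}
    (hu : u ∈ Yfil2 C d n) (hv : v ∈ Yfil2 C d n) : u - v ∈ Yfil2 C d n := by
  have h : u - v = u + -v := sub_eq_add_neg u v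
  rw [h]
  exact add_mem hu (neg_mem_Yfil2 hv)

theorem lie_mem_Yfil2 {m n : ℕ} {u v : RingQuot (YRelG2 C d)}
    (hu : u ∈ Yfil2 C d m) (hv : v ∈ Yfil2 C d n) : ⁅u, v⁆ ∈ Yfil2 C d (m + n) := by
  rw [Ring.lie_def]
  exact sub_mem_Yfil2 (mul_mem_Yfil2 hu hv) (add_comm n m ▸ mul_mem_Yfil2 hv hu)

theorem bYQ2_mem_Yfil2 (j : Fin 2) (r : ℕ) : bYQ2 C d j r ∈ Yfil2 C d (r + 1) :=
  Submodule.subset_span ⟨[Sum.inr (j, r)], by simp [ydeg2], by simp [bYQ2, bY2]⟩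

theorem hYQ2_mem_Yfil2 (i : Fin 2) (s : ℕ) : hYQ2 C d i s ∈ Yfil2 C d (s + 1) :=
  Submodule.subset_span ⟨[Sum.inl (i, s)], by simp [ydeg2], by simp [hYQ2, hY2]⟩

/-- The quotient map from the free algebra respects ring commutators. -/
theorem mkAlgHom_lie (u v : FreeAlgebra (Polynomial ℂ) YGen2) :
    RingQuot.mkAlgHom (Polynomial ℂ) (YRelG2 C d) ⁅u, v⁆ =
      ⁅RingQuot.mkAlgHom (Polynomial ℂ) (YRelG2 C d) u,
        RingQuot.mkAlgHom (Polynomial ℂ) (YRelG2 C d) v⁆ := by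
  simp only [Ring.lie_def, map_sub, map_mul]

/-- Shifting the index from one factor to the other changes `⁅b_{i,s}, b_{j,r+1}⁆` only by
terms of lower degree. -/
theorem lie_sub_lie_mem_Yfil2 (i j : Fin 2) (s r : ℕ) :
    ⁅bYQ2 C d i s, bYQ2 C d j (r + 1)⁆ - ⁅bYQ2 C d i (s + 1), bYQ2 C d j r⁆ ∈
      Yfil2 C d (s + r + 2) := by
  have h := RingQuot.mkAlgHom_rel (Polynomial ℂ) (YRelG2.bb (C := C) (d := d) i j s r)
  rw [map_add, map_sub, map_smul, map_add, map_mul, map_mul, mkAlgHom_lie, mkAlgHom_lie] at h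
  rw [bYQ2, bYQ2, bYQ2, bYQ2, eq_sub_of_add_eq (G := RingQuot (YRelG2 C d)) h]
  refine sub_mem_Yfil2 ?_ (Submodule.smul_mem _ _ (add_mem ?_ ?_))
  · split_ifs
    · rw [map_smul]
      exact Submodule.smul_mem _ _ (Yfil2_mono (by omega) (hYQ2_mem_Yfil2 i (r + s + 1)))
    · rw [map_zero]
      exact zero_mem _
  · exact Yfil2_mono (by omega) (mul_mem_Yfil2 (bYQ2_mem_Yfil2 j r) (bYQ2_mem_Yfil2 i s))
  · exact Yfil2_mono (by omega) (mul_mem_Yfil2 (bYQ2_mem_Yfil2 i s) (bYQ2_mem_Yfil2 j r))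

theorem bYQ2_serre12 (r : ℕ) :
    ⁅bYQ2 C d 0 0, ⁅bYQ2 C d 0 0, bYQ2 C d 1 r⁆⁆ = -bYQ2 C d 1 r := by
  simpa only [bYQ2, mkAlgHom_lie, map_neg] using
    RingQuot.mkAlgHom_rel (Polynomial ℂ) (YRelG2.serre12 (C := C) (d := d) r)

theorem bYQ2_serre21 (r : ℕ) :
    ⁅bYQ2 C d 1 0, ⁅bYQ2 C d 1 0, ⁅bYQ2 C d 1 0, ⁅bYQ2 C d 1 0, bYQ2 C d 0 r⁆⁆⁆⁆ =
      Polynomial.C (-10 : ℂ) • ⁅bYQ2 C d 1 0, ⁅bYQ2 C d 1 0, bYQ2 C d 0 r⁆⁆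
        - Polynomial.C (9 : ℂ) • bYQ2 C d 0 r := by
  simpa only [bYQ2, mkAlgHom_lie, map_sub, map_smul] using
    RingQuot.mkAlgHom_rel (Polynomial ℂ) (YRelG2.serre21 (C := C) (d := d) r)

end Filtration

/-- Lemma 7.2 of the paper.
In the associated graded algebra of the twisted Yangian `'Y` of type `G₂` with respect
to the filtration given by `deg b_{i,m} = m + 1`, `deg h_{i,r} = r + 1` (and
`deg ħ = 0`), the identities `[b̆_{1,k₁},[b̆_{1,k₂},b̆_{2,r}]] = 0` and
`[b̆_{2,k₁},[b̆_{2,k₂},[b̆_{2,k₃},[b̆_{2,k₄},b̆_{1,r}]]]] = 0` hold for all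
`k₁,k₂,k₃,k₄,r ∈ ℕ`, where `b̆_{i,m}` denotes the image of `b_{i,m}` in the associated
graded algebra (realized via the symbol maps `π`). -/
theorem stmt19
    -- the Cartan matrix of type G₂ and its symmetrizer
    (C : Fin 2 → Fin 2 → ℤ) (d : Fin 2 → ℕ)
    (hC00 : C 0 0 = 2) (hC11 : C 1 1 = 2) (hC10 : C 1 0 = -3) (hC01 : C 0 1 = -1)
    (hdpos : ∀ i, 0 < d i)
    (hdsym : ∀ i j, (d i : ℤ) * C i j = (d j : ℤ) * C j i)
    -- the associated graded algebra of 'Y, abstractly characterized via symbol maps π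
    {G : Type*} [Ring G] [Algebra (Polynomial ℂ) G]
    (π : ℕ → RingQuot (YRelG2 C d) →ₗ[Polynomial ℂ] G)
    (hker0 : ∀ x ∈ Yfil2 C d 0, (π 0 x = 0 ↔ x = 0))
    (hker : ∀ (dd : ℕ), ∀ x ∈ Yfil2 C d (dd + 1),
      (π (dd + 1) x = 0 ↔ x ∈ Yfil2 C d dd))
    (hmul : ∀ (d₁ d₂ : ℕ) (x y), x ∈ Yfil2 C d d₁ → y ∈ Yfil2 C d d₂ →
      π d₁ x * π d₂ y = π (d₁ + d₂) (x * y))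
    (hone : π 0 1 = 1)
    (hspan : Submodule.span (Polynomial ℂ)
      (⋃ dd : ℕ, π dd '' {x | x ∈ Yfil2 C d dd}) = ⊤)
    (hind : ∀ F : ℕ →₀ RingQuot (YRelG2 C d), (∀ dd, F dd ∈ Yfil2 C d dd) →
      (F.sum fun dd x => π dd x) = 0 → ∀ dd, π dd (F dd) = 0) :
    (∀ k₁ k₂ r : ℕ,
      ⁅π (k₁ + 1) (bYQ2 C d 0 k₁), ⁅π (k₂ + 1) (bYQ2 C d 0 k₂),
        π (r + 1) (bYQ2 C d 1 r)⁆⁆ = 0) ∧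
    (∀ k₁ k₂ k₃ k₄ r : ℕ,
      ⁅π (k₁ + 1) (bYQ2 C d 1 k₁), ⁅π (k₂ + 1) (bYQ2 C d 1 k₂),
        ⁅π (k₃ + 1) (bYQ2 C d 1 k₃), ⁅π (k₄ + 1) (bYQ2 C d 1 k₄),
          π (r + 1) (bYQ2 C d 0 r)⁆⁆⁆⁆ = 0) := by
  have hzero {n : ℕ} (k : ℕ) (hk : k = n + 1) {u : RingQuot (YRelG2 C d)}
      (hu : u ∈ Yfil2 C d n) : π k u = 0 := by
    subst hk
    exact (hker n u (Yfil2_mono n.le_succ hu)).2 hu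
  have hlie {m n : ℕ} {u v : RingQuot (YRelG2 C d)} (hu : u ∈ Yfil2 C d m)
      (hv : v ∈ Yfil2 C d n) : ⁅π m u, π n v⁆ = π (m + n) ⁅u, v⁆ := by
    rw [Ring.lie_def, Ring.lie_def, hmul m n u v hu hv, hmul n m v u hv hu, map_sub,
      add_comm n m]
  have hb := bYQ2_mem_Yfil2 (C := C) (d := d)
  have hshift (i j : Fin 2) (s r : ℕ) :
      ⁅π (s + 1) (bYQ2 C d i s), π (r + 1 + 1) (bYQ2 C d j (r + 1))⁆ =
        ⁅π (s + 1 + 1) (bYQ2 C d i (s + 1)), π (r + 1) (bYQ2 C d j r)⁆ := by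
    rw [hlie (hb i s) (hb j (r + 1)), hlie (hb i (s + 1)) (hb j r),
      show s + 1 + 1 + (r + 1) = s + 1 + (r + 1 + 1) by omega, ← sub_eq_zero, ← map_sub]
    exact hzero _ (by omega) (lie_sub_lie_mem_Yfil2 i j s r)
  have htwo (z : G) (hz : z + z = 0) : z = 0 := by
    have h : Polynomial.C (1 / 2 : ℂ) • (z + z) = z := by
      rw [← two_smul (Polynomial ℂ) z, smul_smul, ← map_ofNat Polynomial.C 2, ← map_mul]
      norm_num
    rw [← h, hz, smul_zero]
  have hcomm (i : Fin 2) := lie_eq_zero_of_shift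
    (x := fun s => π (s + 1) (bYQ2 C d i s)) htwo (hshift i i)
  constructor
  · refine lie_lie_eq_zero_of_shift (x := fun s => π (s + 1) (bYQ2 C d 0 s))
      (y := fun r => π (r + 1) (bYQ2 C d 1 r)) (hcomm 0) (hshift 0 1) fun r => ?_
    have h₁ := lie_mem_Yfil2 (hb 0 0) (hb 1 r)
    rw [hlie (hb 0 0) (hb 1 r), hlie (hb 0 0) h₁, bYQ2_serre12]
    exact hzero (n := r + 2) _ (by omega) (neg_mem_Yfil2 (Yfil2_mono (by omega) (hb 1 r)))
  · refine lie_lie_lie_lie_eq_zero_of_shift (x := fun s => π (s + 1) (bYQ2 C d 1 s))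
      (y := fun r => π (r + 1) (bYQ2 C d 0 r)) (hcomm 1) (hshift 1 0) fun r => ?_
    have h₁ := lie_mem_Yfil2 (hb 1 0) (hb 0 r)
    have h₂ := lie_mem_Yfil2 (hb 1 0) h₁
    have h₃ := lie_mem_Yfil2 (hb 1 0) h₂
    rw [hlie (hb 1 0) (hb 0 r), hlie (hb 1 0) h₁, hlie (hb 1 0) h₂, hlie (hb 1 0) h₃,
      bYQ2_serre21]
    exact hzero (n := r + 4) _ (by omega)
      (sub_mem_Yfil2 (Submodule.smul_mem _ _ (Yfil2_mono (by omega) h₂))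
        (Submodule.smul_mem _ _ (Yfil2_mono (by omega) (hb 0 r))))

end
end
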